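/- The smooth Hinge loss ψ_G(α;σ) converges to the Hinge loss max{0,1−α} uniformly in α as σ → 0⁺; that is, for every ε > 0 there exists δ > 0 such that for all σ ∈ (0,δ) and all α ∈ ℝ, |ψ_G(α;σ) − max{0,1−α}| < ε. -/

import Mathlib

open Real Set

/-- The probability density function of the standard normal distribution. -/
noncomputable def stdGaussPDF (v : ℝ) : ℝ :=
  (1 / Real.sqrt (2 * Real.pi)) * Real.exp (-v ^ 2 / 2)

/-- The cumulative distribution function of the standard normal distribution. -/
noncomputable def stdGaussCDF (v : ℝ) : ℝ :=
  ∫ t in Set.Iic v, stdGaussPDF t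

/-- The smooth Hinge loss ψ_G(α;σ) = Φ(v)(1−α) + φ(v)σ with v = (1−α)/σ. -/
noncomputable def psiG (σ α : ℝ) : ℝ :=
  stdGaussCDF ((1 - α) / σ) * (1 - α) + stdGaussPDF ((1 - α) / σ) * σ

lemma aux_pdf_eq : stdGaussPDF = ProbabilityTheory.gaussianPDFReal 0 1 := by
  funext v
  simp [stdGaussPDF, ProbabilityTheory.gaussianPDFReal]

lemma aux_int : MeasureTheory.Integrable stdGaussPDF := by
  rw [aux_pdf_eq]; exact ProbabilityTheory.integrable_gaussianPDFReal 0 1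

lemma aux_int_one : ∫ t, stdGaussPDF t = 1 := by
  rw [aux_pdf_eq]; exact ProbabilityTheory.integral_gaussianPDFReal_eq_one 0 one_ne_zero

lemma aux_nonneg (v : ℝ) : 0 ≤ stdGaussPDF v := by
  unfold stdGaussPDF; positivity

lemma aux_le_one (v : ℝ) : stdGaussPDF v ≤ 1 := by
  unfold stdGaussPDF
  have h1 : 1 / Real.sqrt (2 * Real.pi) ≤ 1 := by
    have : 1 ≤ Real.sqrt (2 * Real.pi) := by
      rw [Real.one_le_sqrt]; nlinarith [Real.pi_gt_three]
    rw [div_le_one (by linarith)]; exact this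
  have h2 : Real.exp (-v ^ 2 / 2) ≤ 1 := by
    rw [Real.exp_le_one_iff]; nlinarith [sq_nonneg v]
  exact mul_le_one₀ h1 (Real.exp_pos _).le h2

lemma aux_int_abs : MeasureTheory.Integrable (fun t => |t| * stdGaussPDF t) := by
  have h := (integrable_mul_exp_neg_mul_sq (b := 1 / 2) (by norm_num)).norm.const_mul
    (1 / Real.sqrt (2 * Real.pi))
  refine h.congr (Filter.Eventually.of_forall fun t => ?_)
  simp only [norm_mul, Real.norm_eq_abs, abs_of_pos (Real.exp_pos _), stdGaussPDF]
  rw [show -(1 / 2) * t ^ 2 = -t ^ 2 / 2 by ring]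
  ring

lemma aux_tail (s : Set ℝ) (hs : MeasurableSet s) (c : ℝ) (hc : ∀ t ∈ s, c ≤ |t|) :
    c * ∫ t in s, stdGaussPDF t ≤ ∫ t, |t| * stdGaussPDF t := by
  rw [← MeasureTheory.integral_const_mul]
  calc _ ≤ ∫ t in s, |t| * stdGaussPDF t :=
        MeasureTheory.setIntegral_mono_on (aux_int.integrableOn.const_mul c)
          aux_int_abs.integrableOn hs
          (fun t ht => mul_le_mul_of_nonneg_right (hc t ht) (aux_nonneg t))
    _ ≤ _ := MeasureTheory.setIntegral_le_integral aux_int_abs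
        (Filter.Eventually.of_forall fun t => mul_nonneg (abs_nonneg t) (aux_nonneg t))

lemma aux_bound (v : ℝ) :
    |stdGaussCDF v * v + stdGaussPDF v - max 0 v| ≤ 1 + ∫ t, |t| * stdGaussPDF t := by
  have h0 := aux_nonneg v
  have h1 := aux_le_one v
  rcases le_total v 0 with hv | hv
  · have h := aux_tail (Set.Iic v) measurableSet_Iic (-v) (fun t ht => by
      have : t ≤ v := ht
      linarith [neg_le_abs t])
    have hn : 0 ≤ stdGaussCDF v := MeasureTheory.integral_nonneg (fun t => aux_nonneg t)
    have hp : 0 ≤ stdGaussCDF v * (-v) := mul_nonneg hn (by linarith)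
    rw [max_eq_left hv, abs_le]
    change -v * stdGaussCDF v ≤ _ at h
    constructor <;> linarith
  · have h := aux_tail (Set.Iic v)ᶜ measurableSet_Iic.compl v (fun t ht => by
      have : v < t := by simpa using ht
      linarith [le_abs_self t])
    have hn : 0 ≤ ∫ t in (Set.Iic v)ᶜ, stdGaussPDF t :=
      MeasureTheory.integral_nonneg (fun t => aux_nonneg t)
    have hs : stdGaussCDF v + ∫ t in (Set.Iic v)ᶜ, stdGaussPDF t = 1 := by
      rw [← aux_int_one]
      exact MeasureTheory.integral_add_compl measurableSet_Iic aux_int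
    have hp := mul_nonneg hv hn
    have he : stdGaussCDF v * v = v - v * ∫ t in (Set.Iic v)ᶜ, stdGaussPDF t := by
      rw [eq_sub_of_add_eq hs]; ring
    rw [max_eq_right hv, abs_le, he]
    constructor <;> linarith

theorem stmt_4 :
    ∀ ε : ℝ, 0 < ε → ∃ δ : ℝ, 0 < δ ∧
      ∀ σ : ℝ, 0 < σ → σ < δ → ∀ α : ℝ, |psiG σ α - max 0 (1 - α)| < ε := by
  intro ε hε
  have hM : 0 ≤ ∫ t, |t| * stdGaussPDF t :=
    MeasureTheory.integral_nonneg (fun t => mul_nonneg (abs_nonneg t) (aux_nonneg t))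
  have hb := aux_bound
  generalize (∫ t, |t| * stdGaussPDF t) = M at hM hb
  refine ⟨ε / (1 + M), by positivity, fun σ hσ hσδ α => ?_⟩
  obtain ⟨v, hv⟩ : ∃ v, v = (1 - α) / σ := ⟨_, rfl⟩
  have h1 : 1 - α = σ * v := by rw [hv]; field_simp
  have h2 : psiG σ α - max 0 (1 - α) =
      σ * (stdGaussCDF v * v + stdGaussPDF v - max 0 v) := by
    have : max 0 (σ * v) = σ * max 0 v := by
      rw [mul_max_of_nonneg _ _ hσ.le, mul_zero]
    unfold psiG
    rw [← hv, h1, this]; ring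
  rw [h2, abs_mul, abs_of_pos hσ]
  calc _ ≤ σ * (1 + M) := mul_le_mul_of_nonneg_left (hb v) hσ.le
    _ < ε := by rwa [lt_div_iff₀ (by positivity)] at hσδ
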